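/- Let (ξ_n)_{n≥1} be i.i.d. integrable real random variables with E[ξ_1] < 0, let μ > 0 and h ∈ [0,∞), and let (W_n)_{n≥0} be the DE-CuSum sequence started at 0. Let τ_− = inf{n ≥ 1 : S_n < 0} (finite a.s. since the walk has negative drift) and let the truncated ladder height be max(S_{τ_−}, −h). Then the pre-change duty cycle satisfies limsup_{γ→∞} (1/γ) E[#{1 ≤ k ≤ γ−1 : W_{k−1} ≥ 0}] = E[τ_−] / ( E[τ_−] + E[⌈ −max(S_{τ_−}, −h) / μ ⌉] ). In particular the pre-change duty cycle does not depend on any detection threshold. -/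

import Mathlib

open MeasureTheory Filter Set ProbabilityTheory
open scoped ENNReal

/-- DE-CuSum sequence with parameters `μ > 0` and `h ∈ [0,∞)`, started at `w`:
`W_{n+1} = min (W_n + μ) 0` if `W_n < 0`, and `W_{n+1} = max (W_n + ξ_{n+1}) (-h)` if `W_n ≥ 0`. -/
noncomputable def deCusum (ξ : ℕ → ℝ) (μ h w : ℝ) : ℕ → ℝ
  | 0 => w
  | n + 1 =>
    if deCusum ξ μ h w n < 0 then min (deCusum ξ μ h w n + μ) 0
    else max (deCusum ξ μ h w n + ξ n) (-h)
/-- Partial sum `S_n = ξ_1 + ⋯ + ξ_n` (with the increments indexed from `0`), `S_0 = 0`. -/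
def psum (ξ : ℕ → ℝ) (n : ℕ) : ℝ := ∑ k ∈ Finset.range n, ξ k

/-!
The DE-CuSum statistic regenerates each time it returns to `0` from below: a cycle consists of the
`τ₋` samples until the walk falls below `0`, followed by `⌈-max(S_{τ₋}, -h)/μ⌉` skipped samples.
Whether a cycle starts at time `t` is decided by the increments before `t`, so Wald's identity
shows that, with `U_n` the expected number of cycles started up to time `n`, the expected numbers
of samples taken and skipped up to time `n` are `U_n` times the mean lengths of the two phases, up
to the expected remainder of the current cycle. The remaining off-phase is at most `⌈h/μ⌉`. The
remaining on-phase is at most `∑_{t ≤ n} (τ₋(t) - (n - t))⁺`, where `τ₋(t)` is the passage time of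
the walk restarted at time `t`; its mean `∑_{j ≤ n} E[(τ₋ - j)⁺]` is `o(n)` as soon as
`E[τ₋] < ∞`. Dividing by `n` and eliminating `U_n` gives the limit.

Negative drift makes `τ₋` integrable: by Wald's identity for the increments truncated at a low
level `-M`, which still have negative mean, `∑_k P(τ₋ > k)` is finite.
-/

section Sequences

variable {Ω E : Type*}

/-- The sequence `x` shifted to the left by `t`, i.e. the increments seen from time `t` on. -/
def tail (t : ℕ) (x : ℕ → E) : ℕ → E := fun k => x (t + k)

@[simp]
lemma tail_apply (t : ℕ) (x : ℕ → E) (k : ℕ) : tail t x k = x (t + k) := rfl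

lemma tail_tail (s t : ℕ) (x : ℕ → E) : tail s (tail t x) = tail (t + s) x := by
  ext k
  simp [add_assoc]

variable [MeasurableSpace Ω] [MeasurableSpace E]

@[fun_prop]
lemma measurable_tail (t : ℕ) : Measurable (tail t : (ℕ → E) → ℕ → E) :=
  measurable_pi_lambda _ fun _ => measurable_pi_apply _

/-- The coordinates of the random sequence `X` are independent and identically distributed. -/
structure IsIIDSequence (X : Ω → ℕ → E) (P : Measure Ω) : Prop where
  measurable_eval : ∀ k, Measurable fun ω => X ω k
  iIndepFun : iIndepFun (fun k ω => X ω k) P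
  identDistrib_eval : ∀ k, IdentDistrib (fun ω => X ω k) (fun ω => X ω 0) P P

namespace IsIIDSequence

variable {P : Measure Ω} {X : Ω → ℕ → E}

lemma measurable (hX : IsIIDSequence X P) : Measurable X := measurable_pi_iff.2 hX.measurable_eval

lemma identDistrib_tail (hX : IsIIDSequence X P) (t : ℕ) :
    IdentDistrib X (fun ω => tail t (X ω)) P P where
  aemeasurable_fst := hX.measurable.aemeasurable
  aemeasurable_snd := ((measurable_tail t).comp hX.measurable).aemeasurable
  map_eq := by
    have hlaw : P.map X = Measure.infinitePi fun k => P.map fun ω => X ω k :=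
      hX.iIndepFun.map_fun_eq_infinitePi_map hX.measurable_eval
    have htail : P.map (fun ω => tail t (X ω)) =
        Measure.infinitePi fun k => P.map fun ω => X ω (t + k) :=
      (hX.iIndepFun.precomp (add_right_injective t)).map_fun_eq_infinitePi_map
        fun k => hX.measurable_eval (t + k)
    simp only [hlaw, htail, (hX.identDistrib_eval _).map_eq]

lemma ae_forall_tail (hX : IsIIDSequence X P) {p : (ℕ → E) → Prop}
    (hp : MeasurableSet {x | p x}) (h : ∀ᵐ ω ∂P, p (X ω)) : ∀ᵐ ω ∂P, ∀ t, p (tail t (X ω)) :=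
  ae_all_iff.2 fun t => (hX.identDistrib_tail t).ae_snd hp h

lemma indepFun_restrict_tail (hX : IsIIDSequence X P) (t : ℕ) :
    IndepFun (fun ω => (Finset.range t).restrict (X ω)) (fun ω => tail t (X ω)) P := by
  have := hX.iIndepFun.isProbabilityMeasure
  refine IndepFun.indepFun_process (Y := fun k ω => X ω (t + k))
    ((Finset.measurable_restrict _).comp hX.measurable)
    (fun k => hX.measurable_eval (t + k)) fun J => ?_
  have hdisj : Disjoint (Finset.range t) (J.map (addLeftEmbedding t)) := by
    simp only [Finset.disjoint_left, Finset.mem_range, Finset.mem_map, addLeftEmbedding_apply]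
    lia
  exact (hX.iIndepFun.indepFun_finset _ _ hdisj hX.measurable_eval).comp
    (ψ := fun z (j : J) => z ⟨t + j, Finset.mem_map_of_mem _ j.2⟩) measurable_id
    (measurable_pi_lambda _ fun _ => measurable_pi_apply _)

lemma indepFun_comp_tail (hX : IsIIDSequence X P) {β : Type*} [MeasurableSpace β]
    {f : (ℕ → E) → β} {t : ℕ} (hf : Measurable f) (hft : DependsOn f (Iio t)) :
    IndepFun (fun ω => f (X ω)) (fun ω => tail t (X ω)) P := by
  have := hX.iIndepFun.isProbabilityMeasure
  obtain ⟨ω₀⟩ := nonempty_of_isProbabilityMeasure P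
  have hfactor (ω : Ω) : f (X ω) =
      f (Function.updateFinset (X ω₀) (Finset.range t) ((Finset.range t).restrict (X ω))) :=
    hft fun i hi => by simp [Function.updateFinset, mem_Iio.1 hi]
  simp_rw [hfactor]
  exact (hX.indepFun_restrict_tail t).comp (hf.comp measurable_updateFinset) measurable_id

variable {A : Set (ℕ → E)} {t : ℕ} {g : (ℕ → E) → ℝ}

lemma integrable_indicator_comp_tail (hX : IsIIDSequence X P) (hA : MeasurableSet A)
    (hg : Measurable g) (hgX : Integrable (fun ω => g (X ω)) P) :
    Integrable (fun ω => A.indicator (g ∘ tail t) (X ω)) P :=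
  (((hX.identDistrib_tail t).comp hg).integrable_snd hgX).indicator (hX.measurable hA)

lemma integral_indicator_comp_tail (hX : IsIIDSequence X P) (hA : MeasurableSet A)
    (hAt : DependsOn (· ∈ A) (Iio t)) (hg : Measurable g) :
    ∫ ω, A.indicator (g ∘ tail t) (X ω) ∂P = P.real (X ⁻¹' A) * ∫ ω, g (X ω) ∂P := by
  have hind : DependsOn (A.indicator (1 : (ℕ → E) → ℝ)) (Iio t) := fun x y hxy => by
    have hmem : x ∈ A ↔ y ∈ A := iff_of_eq (hAt hxy)
    by_cases hx : x ∈ A <;> simp [hx, ← hmem]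
  have hindep := (hX.indepFun_comp_tail (measurable_one.indicator hA) hind).comp measurable_id hg
  calc ∫ ω, A.indicator (g ∘ tail t) (X ω) ∂P
      = ∫ ω, A.indicator 1 (X ω) * g (tail t (X ω)) ∂P := by
        refine integral_congr_ae (.of_forall fun ω => ?_)
        by_cases hω : X ω ∈ A <;> simp [hω]
    _ = (∫ ω, A.indicator 1 (X ω) ∂P) * ∫ ω, g (tail t (X ω)) ∂P :=
        hindep.integral_fun_mul_eq_mul_integral
          ((measurable_one.indicator hA).comp hX.measurable).aestronglyMeasurable
          (hg.comp ((measurable_tail t).comp hX.measurable)).aestronglyMeasurable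
    _ = P.real (X ⁻¹' A) * ∫ ω, g (X ω) ∂P := by
        rw [← integral_indicator_one (hX.measurable hA)]
        exact congrArg _ ((hX.identDistrib_tail t).comp hg).integral_eq.symm

lemma integral_sum_indicator_comp_tail (hX : IsIIDSequence X P) {A : ℕ → Set (ℕ → E)}
    (hA : ∀ t, MeasurableSet (A t)) (hAt : ∀ t, DependsOn (· ∈ A t) (Iio t)) (hg : Measurable g)
    (hgX : Integrable (fun ω => g (X ω)) P) (n : ℕ) :
    ∫ ω, ∑ t ∈ Finset.range n, (A t).indicator (g ∘ tail t) (X ω) ∂P =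
      (∑ t ∈ Finset.range n, P.real (X ⁻¹' A t)) * ∫ ω, g (X ω) ∂P := by
  rw [integral_finsetSum _ fun t _ => hX.integrable_indicator_comp_tail (hA t) hg hgX,
    Finset.sum_mul]
  exact Finset.sum_congr rfl fun t _ => hX.integral_indicator_comp_tail (hA t) (hAt t) hg

end IsIIDSequence

end Sequences

section PassageTime

variable {μ h w : ℝ} {x : ℕ → ℝ}

lemma psum_succ_tail (x : ℕ → ℝ) (n : ℕ) : psum x (n + 1) = x 0 + psum (tail 1 x) n := by
  simp [psum, Finset.sum_range_succ', add_comm]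

/-- The positive times at which the walk with increments `x` started at `w` is negative. -/
def negTimes (w : ℝ) (x : ℕ → ℝ) : Set ℕ := {n | 1 ≤ n ∧ w + psum x n < 0}

/-- The time `τ₋` at which the walk with increments `x` started at `w` first becomes negative,
with value `0` if it never does. -/
noncomputable def passageTime (w : ℝ) (x : ℕ → ℝ) : ℕ := sInf (negTimes w x)

/-- The number of steps of size `μ` that lift the walk started at `w`, truncated at `-h` at its
passage time, back to `0`. -/
noncomputable def offTime (μ h w : ℝ) (x : ℕ → ℝ) : ℕ :=
  ⌈-max (w + psum x (passageTime w x)) (-h) / μ⌉₊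

lemma succ_mem_negTimes_iff (hw : 0 ≤ w + x 0) (n : ℕ) :
    n + 1 ∈ negTimes w x ↔ n ∈ negTimes (w + x 0) (tail 1 x) := by
  rcases n.eq_zero_or_pos with rfl | hn
  · simpa [negTimes, psum] using hw
  · simp [negTimes, psum_succ_tail, add_assoc, Nat.one_le_iff_ne_zero, hn.ne']

lemma nonempty_negTimes_tail (hw : 0 ≤ w + x 0) (hx : (negTimes w x).Nonempty) :
    (negTimes (w + x 0) (tail 1 x)).Nonempty := by
  obtain ⟨n, hn⟩ := hx
  exact ⟨n - 1, (succ_mem_negTimes_iff hw _).1 (by rwa [Nat.sub_add_cancel hn.1])⟩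

lemma passageTime_of_neg (hw : w + x 0 < 0) : passageTime w x = 1 := by
  have h1 : 1 ∈ negTimes w x := by simpa [negTimes, psum] using hw
  exact le_antisymm (Nat.sInf_le h1) (Nat.sInf_mem ⟨1, h1⟩).1

lemma one_le_passageTime (hx : (negTimes w x).Nonempty) : 1 ≤ passageTime w x :=
  (Nat.sInf_mem hx).1

lemma passageTime_of_nonneg (hw : 0 ≤ w + x 0) (hx : (negTimes w x).Nonempty) :
    passageTime w x = passageTime (w + x 0) (tail 1 x) + 1 := by
  have hset : {n | n + 1 ∈ negTimes w x} = negTimes (w + x 0) (tail 1 x) :=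
    Set.ext (succ_mem_negTimes_iff hw)
  rw [passageTime, passageTime, ← hset]
  exact (Nat.sInf_add (p := (· ∈ negTimes w x)) (one_le_passageTime hx)).symm

lemma offTime_of_neg (hw : w + x 0 < 0) : offTime μ h w x = ⌈-max (w + x 0) (-h) / μ⌉₊ := by
  simp [offTime, passageTime_of_neg hw, psum]

lemma offTime_of_nonneg (hw : 0 ≤ w + x 0) (hx : (negTimes w x).Nonempty) :
    offTime μ h w x = offTime μ h (w + x 0) (tail 1 x) := by
  rw [offTime, passageTime_of_nonneg hw hx, psum_succ_tail, ← add_assoc, offTime]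

lemma offTime_le (hμ : 0 < μ) : offTime μ h w x ≤ ⌈h / μ⌉₊ :=
  Nat.ceil_mono <| div_le_div_of_nonneg_right (neg_le.1 (le_max_right _ _)) hμ.le

end PassageTime

section Path

variable {μ h : ℝ} {x : ℕ → ℝ} {n : ℕ}

lemma deCusum_succ_of_neg (hn : deCusum x μ h 0 n < 0) :
    deCusum x μ h 0 (n + 1) = min (deCusum x μ h 0 n + μ) 0 := if_pos hn

lemma deCusum_succ_of_nonneg (hn : 0 ≤ deCusum x μ h 0 n) :
    deCusum x μ h 0 (n + 1) = max (deCusum x μ h 0 n + x n) (-h) := if_neg hn.not_gt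

lemma deCusum_succ_of_nonneg_add (hh : 0 ≤ h) (hn : 0 ≤ deCusum x μ h 0 n)
    (hxn : 0 ≤ deCusum x μ h 0 n + x n) :
    deCusum x μ h 0 (n + 1) = deCusum x μ h 0 n + x n := by
  rw [deCusum_succ_of_nonneg hn, max_eq_left (by linarith)]

lemma neg_le_deCusum (hμ : 0 < μ) (hh : 0 ≤ h) (n : ℕ) : -h ≤ deCusum x μ h 0 n := by
  induction n with
  | zero => simpa [deCusum] using hh
  | succ n ih =>
    rcases lt_or_ge (deCusum x μ h 0 n) 0 with hn | hn
    · rw [deCusum_succ_of_neg hn]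
      exact le_min (by linarith) (by linarith)
    · rw [deCusum_succ_of_nonneg hn]
      exact le_max_right _ _

/-- The increment sequences for which the DE-CuSum scheme started at `0` takes the sample at
time `n + 1`. -/
def sampledAt (μ h : ℝ) (n : ℕ) : Set (ℕ → ℝ) := {x | 0 ≤ deCusum x μ h 0 n}

/-- The increment sequences for which a new cycle of the DE-CuSum statistic starts from `0` at
time `n`: at time `0`, and whenever the statistic returns to `0` from below, including the return
within a single step when `h = 0`. -/
def renewalAt (μ h : ℝ) : ℕ → Set (ℕ → ℝ)
  | 0 => univ
  | n + 1 => {x | 0 ≤ deCusum x μ h 0 (n + 1) ∧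
      (deCusum x μ h 0 n < 0 ∨ deCusum x μ h 0 n + x n < 0)}

lemma deCusum_eq_zero_of_mem_renewalAt (hh : 0 ≤ h) (hx : x ∈ renewalAt μ h n) :
    deCusum x μ h 0 n = 0 := by
  cases n with
  | zero => rfl
  | succ n =>
    refine le_antisymm ?_ hx.1
    rcases lt_or_ge (deCusum x μ h 0 n) 0 with hn | hn
    · simp [deCusum_succ_of_neg hn]
    · have hneg := hx.2.resolve_left hn.not_gt
      simp [deCusum_succ_of_nonneg hn, hneg.le, hh]

lemma nonempty_negTimes_deCusum (hh : 0 ≤ h) (hx : ∀ t, (negTimes 0 (tail t x)).Nonempty) (n : ℕ)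
    (hn : 0 ≤ deCusum x μ h 0 n) : (negTimes (deCusum x μ h 0 n) (tail n x)).Nonempty := by
  induction n with
  | zero => exact hx 0
  | succ n ih =>
    by_cases hren : x ∈ renewalAt μ h (n + 1)
    · rw [deCusum_eq_zero_of_mem_renewalAt hh hren]
      exact hx (n + 1)
    · have hcont : 0 ≤ deCusum x μ h 0 n ∧ 0 ≤ deCusum x μ h 0 n + x n := by
        simpa [renewalAt, hn] using hren
      have := nonempty_negTimes_tail (x := tail n x) hcont.2 (ih hcont.1)
      rwa [tail_tail, tail_apply, add_zero, ← deCusum_succ_of_nonneg_add hh hcont.1 hcont.2] at this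

open scoped Classical in
/-- The remaining number of samples to be taken at time `n` in the current cycle, including the
cycle that starts at time `n`, if there is one. -/
noncomputable def residualOn (μ h : ℝ) (x : ℕ → ℝ) (n : ℕ) : ℕ :=
  if 0 ≤ deCusum x μ h 0 n then passageTime (deCusum x μ h 0 n) (tail n x) else 0

open scoped Classical in
/-- The remaining number of samples to be skipped at time `n` in the current cycle, including the
cycle that starts at time `n`, if there is one. -/
noncomputable def residualOff (μ h : ℝ) (x : ℕ → ℝ) (n : ℕ) : ℕ :=
  if 0 ≤ deCusum x μ h 0 n then offTime μ h (deCusum x μ h 0 n) (tail n x)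
  else ⌈-deCusum x μ h 0 n / μ⌉₊

lemma residualOn_of_continue (hh : 0 ≤ h) (hx : ∀ t, (negTimes 0 (tail t x)).Nonempty)
    (hn : 0 ≤ deCusum x μ h 0 n) (hxn : 0 ≤ deCusum x μ h 0 n + x n) :
    residualOn μ h x n = residualOn μ h x (n + 1) + 1 := by
  have hpass := passageTime_of_nonneg (x := tail n x) hxn (nonempty_negTimes_deCusum hh hx n hn)
  simp_all [residualOn, deCusum_succ_of_nonneg_add, tail_tail]

lemma residualOff_of_continue (hh : 0 ≤ h) (hx : ∀ t, (negTimes 0 (tail t x)).Nonempty)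
    (hn : 0 ≤ deCusum x μ h 0 n) (hxn : 0 ≤ deCusum x μ h 0 n + x n) :
    residualOff μ h x n = residualOff μ h x (n + 1) := by
  have hoff := offTime_of_nonneg (μ := μ) (h := h) (x := tail n x) hxn
    (nonempty_negTimes_deCusum hh hx n hn)
  simp_all [residualOff, deCusum_succ_of_nonneg_add, tail_tail]

lemma mem_renewalAt_succ_iff (hn : deCusum x μ h 0 n < 0 ∨ deCusum x μ h 0 n + x n < 0) :
    x ∈ renewalAt μ h (n + 1) ↔ 0 ≤ deCusum x μ h 0 (n + 1) := and_iff_left hn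

lemma residualOn_succ_of_interrupt (hh : 0 ≤ h)
    (hn : deCusum x μ h 0 n < 0 ∨ deCusum x μ h 0 n + x n < 0) :
    (residualOn μ h x (n + 1) : ℝ) =
      (renewalAt μ h (n + 1)).indicator ((fun y => (passageTime 0 y : ℝ)) ∘ tail (n + 1)) x := by
  by_cases hren : x ∈ renewalAt μ h (n + 1)
  · simp [hren, residualOn, deCusum_eq_zero_of_mem_renewalAt hh hren]
  · simp [hren, residualOn, mt (mem_renewalAt_succ_iff hn).2 hren]

lemma residualOff_succ_of_interrupt (hh : 0 ≤ h)
    (hn : deCusum x μ h 0 n < 0 ∨ deCusum x μ h 0 n + x n < 0) :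
    (residualOff μ h x (n + 1) : ℝ) = ⌈-deCusum x μ h 0 (n + 1) / μ⌉₊ +
      (renewalAt μ h (n + 1)).indicator ((fun y => (offTime μ h 0 y : ℝ)) ∘ tail (n + 1)) x := by
  by_cases hren : x ∈ renewalAt μ h (n + 1)
  · simp [hren, residualOff, deCusum_eq_zero_of_mem_renewalAt hh hren]
  · simp [hren, residualOff, mt (mem_renewalAt_succ_iff hn).2 hren]

lemma residualOn_add_renewal (hh : 0 ≤ h) (hx : ∀ t, (negTimes 0 (tail t x)).Nonempty) (n : ℕ) :
    residualOn μ h x n +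
        (renewalAt μ h (n + 1)).indicator ((fun y => (passageTime 0 y : ℝ)) ∘ tail (n + 1)) x =
      (sampledAt μ h n).indicator 1 x + residualOn μ h x (n + 1) := by
  by_cases hn : deCusum x μ h 0 n < 0 ∨ deCusum x μ h 0 n + x n < 0
  · rw [residualOn_succ_of_interrupt hh hn, add_left_inj]
    by_cases hs : 0 ≤ deCusum x μ h 0 n
    · have hneg := hn.resolve_left hs.not_gt
      simp [residualOn, sampledAt, hs, passageTime_of_neg (x := tail n x) hneg]
    · simp [residualOn, sampledAt, hs]
  · have hren : x ∉ renewalAt μ h (n + 1) := fun hren => hn hren.2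
    push Not at hn
    simp [hren, sampledAt, hn.1, residualOn_of_continue hh hx hn.1 hn.2, add_comm]

lemma ceil_neg_min_add_div_add_one {w : ℝ} (hμ : 0 < μ) (hw : w < 0) :
    ⌈-min (w + μ) 0 / μ⌉₊ + 1 = ⌈-w / μ⌉₊ := by
  rcases le_total 0 (w + μ) with h0 | h0
  · rw [min_eq_right h0, neg_zero, zero_div, Nat.ceil_zero, eq_comm,
      Nat.ceil_eq_iff (Nat.succ_ne_zero 0)]
    exact ⟨by simpa using div_pos (neg_pos.2 hw) hμ, by simpa [div_le_one hμ] using by linarith⟩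
  · have hdiv : -w / μ = -(w + μ) / μ + 1 := by
      field_simp
      ring
    rw [min_eq_left h0, hdiv, Nat.ceil_add_one (div_nonneg (neg_nonneg.2 h0) hμ.le)]

lemma residualOff_add_renewal (hμ : 0 < μ) (hh : 0 ≤ h)
    (hx : ∀ t, (negTimes 0 (tail t x)).Nonempty) (n : ℕ) :
    residualOff μ h x n +
        (renewalAt μ h (n + 1)).indicator ((fun y => (offTime μ h 0 y : ℝ)) ∘ tail (n + 1)) x +
        (sampledAt μ h n).indicator 1 x =
      residualOff μ h x (n + 1) + 1 := by
  by_cases hn : deCusum x μ h 0 n < 0 ∨ deCusum x μ h 0 n + x n < 0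
  · rw [residualOff_succ_of_interrupt hh hn]
    by_cases hs : 0 ≤ deCusum x μ h 0 n
    · have hneg := hn.resolve_left hs.not_gt
      simp [residualOff, sampledAt, hs, offTime_of_neg (x := tail n x) hneg,
        deCusum_succ_of_nonneg hs]
    · have hceil := ceil_neg_min_add_div_add_one hμ (not_le.1 hs)
      simp [residualOff, sampledAt, hs, deCusum_succ_of_neg (not_le.1 hs), ← hceil]
      ring
  · have hren : x ∉ renewalAt μ h (n + 1) := fun hren => hn hren.2
    push Not at hn
    simp [hren, sampledAt, hn.1, residualOff_of_continue hh hx hn.1 hn.2]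

/-- The total of the rewards `g` collected in the cycles started up to time `n`, where `g` is
evaluated at the increments from the start of the cycle on. -/
noncomputable def renewalReward (μ h : ℝ) (g : (ℕ → ℝ) → ℝ) (n : ℕ) (x : ℕ → ℝ) : ℝ :=
  ∑ t ∈ Finset.range (n + 1), (renewalAt μ h t).indicator (g ∘ tail t) x

/-- The number of samples that the DE-CuSum scheme takes at the times `1, …, n`. -/
noncomputable def sampleCount (μ h : ℝ) (n : ℕ) (x : ℕ → ℝ) : ℝ :=
  ∑ j ∈ Finset.range n, (sampledAt μ h j).indicator 1 x

lemma sampleCount_eq_ncard (μ h : ℝ) (n : ℕ) (x : ℕ → ℝ) :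
    sampleCount μ h n x = ({j : ℕ | j < n ∧ 0 ≤ deCusum x μ h 0 j}.ncard : ℝ) := by
  classical
  have hset : {j : ℕ | j < n ∧ 0 ≤ deCusum x μ h 0 j} =
      (Finset.range n).filter fun j => 0 ≤ deCusum x μ h 0 j := by
    ext j
    simp
  rw [hset, Set.ncard_coe_finset, Finset.natCast_card_filter]
  exact Finset.sum_congr rfl fun j _ => by
    by_cases hj : 0 ≤ deCusum x μ h 0 j <;> simp [sampledAt, hj]

theorem renewalReward_passageTime_eq (hh : 0 ≤ h) (hx : ∀ t, (negTimes 0 (tail t x)).Nonempty)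
    (n : ℕ) : renewalReward μ h (fun y => passageTime 0 y) n x =
      sampleCount μ h n x + residualOn μ h x n := by
  induction n with
  | zero => simp [renewalReward, renewalAt, sampleCount, residualOn, deCusum]
  | succ n ih =>
    have hstep := residualOn_add_renewal (μ := μ) hh hx n
    rw [renewalReward, Finset.sum_range_succ, ← renewalReward, ih, sampleCount, sampleCount,
      Finset.sum_range_succ]
    linarith

theorem renewalReward_offTime_add (hμ : 0 < μ) (hh : 0 ≤ h)
    (hx : ∀ t, (negTimes 0 (tail t x)).Nonempty) (n : ℕ) :
    renewalReward μ h (fun y => offTime μ h 0 y) n x + sampleCount μ h n x =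
      n + residualOff μ h x n := by
  induction n with
  | zero => simp [renewalReward, renewalAt, sampleCount, residualOff, deCusum]
  | succ n ih =>
    have hstep := residualOff_add_renewal hμ hh hx n
    rw [sampleCount] at ih
    rw [renewalReward, Finset.sum_range_succ, ← renewalReward, sampleCount, Finset.sum_range_succ]
    push_cast
    linarith

lemma residualOff_le (hμ : 0 < μ) (hh : 0 ≤ h) (x : ℕ → ℝ) (n : ℕ) :
    residualOff μ h x n ≤ ⌈h / μ⌉₊ := by
  rw [residualOff]
  split_ifs
  · exact offTime_le hμ
  · exact Nat.ceil_mono <| div_le_div_of_nonneg_right (neg_le.1 (neg_le_deCusum hμ hh n)) hμ.le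

lemma exists_residualOn_le (hh : 0 ≤ h) (hx : ∀ t, (negTimes 0 (tail t x)).Nonempty) (n : ℕ) :
    ∃ t ≤ n, residualOn μ h x n ≤ passageTime 0 (tail t x) - (n - t) := by
  induction n with
  | zero => exact ⟨0, le_rfl, by simp [residualOn, deCusum]⟩
  | succ n ih =>
    by_cases hn : deCusum x μ h 0 n < 0 ∨ deCusum x μ h 0 n + x n < 0
    · refine ⟨n + 1, le_rfl, ?_⟩
      rw [← Nat.cast_le (α := ℝ), residualOn_succ_of_interrupt hh hn]
      simpa [Function.comp_def] using indicator_le_self' (fun _ _ => Nat.cast_nonneg _) x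
    · push Not at hn
      obtain ⟨t, htn, ht⟩ := ih
      have := residualOn_of_continue hh hx hn.1 hn.2
      exact ⟨t, by lia, by lia⟩

theorem residualOn_le_sum (hh : 0 ≤ h) (hx : ∀ t, (negTimes 0 (tail t x)).Nonempty) (n : ℕ) :
    residualOn μ h x n ≤ ∑ t ∈ Finset.range (n + 1), (passageTime 0 (tail t x) - (n - t)) := by
  obtain ⟨t, htn, ht⟩ := exists_residualOn_le (μ := μ) hh hx n
  exact ht.trans <| Finset.single_le_sum
    (f := fun t => passageTime 0 (tail t x) - (n - t)) (fun _ _ => Nat.zero_le _)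
    (Finset.mem_range.2 (Nat.lt_succ_of_le htn))

end Path

section Measurability

lemma measurable_sInf_nat {α : Type*} [MeasurableSpace α] {p : α → ℕ → Prop}
    (hp : ∀ n, MeasurableSet {a | p a n}) : Measurable fun a => sInf {n | p a n} := by
  classical
  have hq (a : α) : ∃ n, p a n ∨ ∀ m, ¬p a m := by
    by_cases ha : ∃ n, p a n
    · exact ha.imp fun _ => Or.inl
    · exact ⟨0, Or.inr (not_exists.1 ha)⟩
  have hfind : (fun a => sInf {n | p a n}) = fun a => Nat.find (hq a) := by
    ext a
    by_cases ha : ∃ n, p a n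
    · have hiff (n : ℕ) : (p a n ∨ ∀ m, ¬p a m) ↔ p a n :=
        or_iff_left (not_forall_not.2 ha)
      exact (Nat.sInf_def ha).trans (Nat.find_congr' (hiff _).symm)
    · have hempty : {n | p a n} = ∅ := eq_empty_iff_forall_notMem.2 (not_exists.1 ha)
      rw [hempty, Nat.sInf_empty, eq_comm, Nat.find_eq_zero]
      exact Or.inr (not_exists.1 ha)
  rw [hfind]
  exact measurable_find hq fun n =>
    (hp n).union (.iInter fun m => (hp m).compl) |>.congr (by ext; simp)

variable {μ h : ℝ}

@[fun_prop]
lemma measurable_psum (n : ℕ) : Measurable fun x : ℕ → ℝ => psum x n := by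
  unfold psum
  fun_prop

lemma dependsOn_psum (n : ℕ) : DependsOn (fun x : ℕ → ℝ => psum x n) (Iio n) :=
  fun _ _ hxy => Finset.sum_congr rfl fun k hk => hxy k (Finset.mem_range.1 hk)

lemma measurableSet_mem_negTimes (w : ℝ) (n : ℕ) : MeasurableSet {x | n ∈ negTimes w x} :=
  (MeasurableSet.const _).inter
    (measurableSet_lt ((measurable_psum n).const_add w) measurable_const)

lemma measurableSet_nonempty_negTimes (w : ℝ) : MeasurableSet {x | (negTimes w x).Nonempty} := by
  simp only [Set.Nonempty, ofPred_exists]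
  exact .iUnion (measurableSet_mem_negTimes w)

@[fun_prop]
lemma measurable_passageTime (w : ℝ) : Measurable (passageTime w) :=
  measurable_sInf_nat (measurableSet_mem_negTimes w)

@[fun_prop]
lemma measurable_offTime (μ h w : ℝ) : Measurable (offTime μ h w) := by
  have hpsum : Measurable fun x => psum x (passageTime w x) :=
    (measurable_from_prod_countable_right (f := fun z : ℕ × (ℕ → ℝ) => psum z.2 z.1)
      measurable_psum).comp ((measurable_passageTime w).prodMk measurable_id)
  unfold offTime
  fun_prop

@[fun_prop]
lemma measurable_deCusum (n : ℕ) : Measurable fun x => deCusum x μ h 0 n := by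
  induction n with
  | zero => exact measurable_const
  | succ n ih => exact .ite (measurableSet_lt ih measurable_const) (by fun_prop) (by fun_prop)

lemma dependsOn_deCusum (n : ℕ) : DependsOn (fun x => deCusum x μ h 0 n) (Iio n) := by
  induction n with
  | zero => exact fun _ _ _ => rfl
  | succ n ih =>
    intro x y hxy
    have hn : deCusum x μ h 0 n = deCusum y μ h 0 n := ih fun k hk => hxy k (Nat.lt_succ_of_lt hk)
    simp only [deCusum, hn, hxy n (Nat.lt_succ_self n)]

lemma measurableSet_sampledAt (n : ℕ) : MeasurableSet (sampledAt μ h n) :=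
  measurableSet_le measurable_const (measurable_deCusum n)

lemma measurableSet_renewalAt (n : ℕ) : MeasurableSet (renewalAt μ h n) := by
  cases n with
  | zero => exact .univ
  | succ n =>
    have hstep : Measurable fun x => deCusum x μ h 0 n + x n := by fun_prop
    exact (measurableSet_sampledAt (n + 1)).inter <|
      (measurableSet_lt (measurable_deCusum n) measurable_const).union
        (measurableSet_lt hstep measurable_const)

lemma dependsOn_renewalAt (n : ℕ) : DependsOn (· ∈ renewalAt μ h n) (Iio n) := by
  cases n with
  | zero => exact fun _ _ _ => rfl
  | succ n =>
    intro x y hxy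
    have hn : deCusum x μ h 0 n = deCusum y μ h 0 n :=
      dependsOn_deCusum n fun k hk => hxy k (Nat.lt_succ_of_lt hk)
    simp only [renewalAt, mem_ofPred_eq, dependsOn_deCusum (n + 1) hxy, hn,
      hxy n (Nat.lt_succ_self n)]

end Measurability

section NegativeDrift

/-- The increment sequences whose walk started at `0` stays nonnegative up to time `n`. -/
def survival (n : ℕ) : Set (ℕ → ℝ) := {x | ∀ j ≤ n, 0 ≤ psum x j}

lemma survival_succ_subset (n : ℕ) : survival (n + 1) ⊆ survival n :=
  fun _ hx j hj => hx j (Nat.le_succ_of_le hj)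

lemma measurableSet_survival (n : ℕ) : MeasurableSet (survival n) := by
  simp only [survival, ofPred_forall]
  exact .iInter fun j => .iInter fun _ => measurableSet_le measurable_const (measurable_psum j)

lemma dependsOn_survival (n : ℕ) : DependsOn (· ∈ survival n) (Iio n) := fun x y hxy => by
  have hj (j : ℕ) (hjn : j ≤ n) : psum x j = psum y j :=
    dependsOn_psum j fun k hk => hxy k (lt_of_lt_of_le hk hjn)
  exact propext (forall₂_congr fun j hjn => by rw [hj j hjn])

lemma mem_survival_of_lt_passageTime {x : ℕ → ℝ} {n : ℕ} (hn : n < passageTime 0 x) :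
    x ∈ survival n := by
  intro j hj
  rcases j.eq_zero_or_pos with rfl | hpos
  · simp [psum]
  · have := Nat.notMem_of_lt_sInf (lt_of_le_of_lt hj hn)
    simpa [negTimes, Nat.one_le_iff_ne_zero, hpos.ne'] using this

lemma nonempty_negTimes_of_notMem_survival {x : ℕ → ℝ} {n : ℕ} (hx : x ∉ survival n) :
    (negTimes 0 x).Nonempty := by
  obtain ⟨j, -, hj⟩ : ∃ j ≤ n, psum x j < 0 := by simpa [survival] using hx
  refine ⟨j, Nat.one_le_iff_ne_zero.2 fun h0 => ?_, by simpa using hj⟩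
  simp [h0, psum] at hj

/-- The last step of the walk stopped at `τ₋` starts from a nonnegative value, so the walk with
increments truncated at `-M` cannot be below `-M` when it is stopped. -/
lemma neg_le_sum_survival_indicator {M : ℝ} (hM : 0 ≤ M) (x : ℕ → ℝ) (n : ℕ) :
    -M ≤ ∑ k ∈ Finset.range n, (survival k).indicator ((fun y => max (y 0) (-M)) ∘ tail k) x := by
  suffices hstrong : (x ∈ survival n → psum x n ≤ ∑ k ∈ Finset.range n,
      (survival k).indicator ((fun y => max (y 0) (-M)) ∘ tail k) x) ∧
      -M ≤ ∑ k ∈ Finset.range n,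
        (survival k).indicator ((fun y => max (y 0) (-M)) ∘ tail k) x from hstrong.2
  induction n with
  | zero => simpa [psum] using hM
  | succ n ih =>
    rw [Finset.sum_range_succ]
    by_cases hx : x ∈ survival n
    · have hpsum : psum x (n + 1) = psum x n + x n := Finset.sum_range_succ _ _
      have hmax : x n ≤ max (x n) (-M) ∧ -M ≤ max (x n) (-M) := ⟨le_max_left _ _, le_max_right _ _⟩
      simp only [indicator_of_mem hx, Function.comp_apply, tail_apply, add_zero]
      exact ⟨fun _ => by linarith [ih.1 hx], by linarith [ih.1 hx, hx n le_rfl]⟩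
    · simpa [hx] using ⟨fun hx' => absurd (survival_succ_subset n hx') hx, ih.2⟩

variable {Ω : Type*} [MeasurableSpace Ω] {P : Measure Ω}

lemma norm_max_neg_le_norm {M : ℝ} (hM : 0 ≤ M) (a : ℝ) : ‖max a (-M)‖ ≤ ‖a‖ :=
  abs_le.2 ⟨(neg_abs_le a).trans (le_max_left _ _),
    max_le (le_abs_self a) (by linarith [norm_nonneg a])⟩

lemma integrable_max_neg {f : Ω → ℝ} (hint : Integrable f P) {M : ℝ} (hM : 0 ≤ M) :
    Integrable (fun ω => max (f ω) (-M)) P :=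
  hint.mono (hint.1.sup aestronglyMeasurable_const) (.of_forall fun _ => norm_max_neg_le_norm hM _)

lemma exists_integral_max_neg_lt {f : Ω → ℝ} {c : ℝ} (hint : Integrable f P)
    (hc : ∫ ω, f ω ∂P < c) : ∃ M, 0 ≤ M ∧ ∫ ω, max (f ω) (-M) ∂P < c := by
  have hlim : Tendsto (fun M : ℕ => ∫ ω, max (f ω) (-M : ℝ) ∂P) atTop (nhds (∫ ω, f ω ∂P)) := by
    refine tendsto_integral_of_dominated_convergence _
      (fun M => (integrable_max_neg hint M.cast_nonneg).1) hint.norm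
      (fun M => .of_forall fun ω => norm_max_neg_le_norm M.cast_nonneg _)
      (.of_forall fun ω => tendsto_const_nhds.congr' ?_)
    filter_upwards [eventually_ge_atTop ⌈-f ω⌉₊] with M hM
    exact (max_eq_left (neg_le.1 (Nat.ceil_le.1 hM))).symm
  obtain ⟨M, hM⟩ := (hlim.eventually_lt_const hc).exists
  exact ⟨M, M.cast_nonneg, hM⟩

namespace IsIIDSequence

variable {X : Ω → ℕ → ℝ}

theorem tsum_measure_survival_ne_top (hX : IsIIDSequence X P)
    (hint : Integrable (fun ω => X ω 0) P) (hmean : ∫ ω, X ω 0 ∂P < 0) :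
    ∑' n, P (X ⁻¹' survival n) ≠ ∞ := by
  have := hX.iIndepFun.isProbabilityMeasure
  obtain ⟨M, hM, hmeanM⟩ := exists_integral_max_neg_lt hint hmean
  have hintM := integrable_max_neg hint hM
  have hbound (n : ℕ) : ∑ k ∈ Finset.range n, P.real (X ⁻¹' survival k) ≤
      M / -∫ ω, max (X ω 0) (-M) ∂P := by
    have hwald := hX.integral_sum_indicator_comp_tail (g := fun y => max (y 0) (-M))
      measurableSet_survival dependsOn_survival (by fun_prop) hintM n
    have hlower : -M ≤ ∫ ω, ∑ k ∈ Finset.range n,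
        (survival k).indicator ((fun y => max (y 0) (-M)) ∘ tail k) (X ω) ∂P := by
      have hle := integral_mono (integrable_const (-M)) (integrable_finsetSum _ fun k _ =>
        hX.integrable_indicator_comp_tail (measurableSet_survival k) (by fun_prop) hintM)
        fun ω => neg_le_sum_survival_indicator hM (X ω) n
      simpa using hle
    rw [le_div_iff₀ (neg_pos.2 hmeanM)]
    linarith
  have hsummable := summable_of_sum_range_le (fun _ => measureReal_nonneg) hbound
  simpa [measureReal_def] using hsummable.tsum_ofReal_ne_top

lemma ae_nonempty_negTimes (hX : IsIIDSequence X P)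
    (hint : Integrable (fun ω => X ω 0) P) (hmean : ∫ ω, X ω 0 ∂P < 0) :
    ∀ᵐ ω ∂P, (negTimes 0 (X ω)).Nonempty := by
  filter_upwards [ae_eventually_notMem (hX.tsum_measure_survival_ne_top hint hmean)] with ω hω
  obtain ⟨n, hn⟩ := hω.exists
  exact nonempty_negTimes_of_notMem_survival hn

lemma integrable_passageTime (hX : IsIIDSequence X P)
    (hint : Integrable (fun ω => X ω 0) P) (hmean : ∫ ω, X ω 0 ∂P < 0) :
    Integrable (fun ω => (passageTime 0 (X ω) : ℝ)) P := by
  have hmeas : Measurable fun ω => passageTime 0 (X ω) :=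
    (measurable_passageTime 0).comp hX.measurable
  have hle (ω : Ω) : (passageTime 0 (X ω) : ℝ≥0∞) ≤ ∑' n, (X ⁻¹' survival n).indicator 1 ω := by
    refine le_trans (le_of_eq ?_) (ENNReal.sum_le_tsum (Finset.range (passageTime 0 (X ω))))
    rw [Finset.sum_congr rfl fun n hn => indicator_of_mem
      (mem_preimage.2 (mem_survival_of_lt_passageTime (Finset.mem_range.1 hn))) _]
    simp
  refine ⟨(measurable_from_nat.comp hmeas).aestronglyMeasurable, ?_⟩
  calc ∫⁻ ω, ‖(passageTime 0 (X ω) : ℝ)‖ₑ ∂P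
      ≤ ∫⁻ ω, ∑' n, (X ⁻¹' survival n).indicator 1 ω ∂P := lintegral_mono fun ω => by
        simpa [enorm_eq_nnnorm] using hle ω
    _ = ∑' n, P (X ⁻¹' survival n) := by
        have hS (n : ℕ) := hX.measurable (measurableSet_survival n)
        rw [lintegral_tsum fun n => (measurable_one.indicator (hS n)).aemeasurable]
        simp only [lintegral_indicator_one (hS _)]
    _ < ∞ := (hX.tsum_measure_survival_ne_top hint hmean).lt_top

end IsIIDSequence

end NegativeDrift

section DutyCycle

lemma tendsto_div_of_renewal_bounds {N U e : ℕ → ℝ} {T C K : ℝ} (hT : 0 < T) (hC : 0 ≤ C)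
    (hon : ∀ n, N n ≤ U n * T) (hon' : ∀ n, U n * T ≤ N n + e n)
    (hoff : ∀ n : ℕ, n ≤ U n * C + N n) (hoff' : ∀ n : ℕ, U n * C + N n ≤ n + K)
    (he : Tendsto (fun n : ℕ => e n / (n + 1)) atTop (nhds 0)) :
    Tendsto (fun n : ℕ => N n / (n + 1)) atTop (nhds (T / (T + C))) := by
  have hTC : 0 < T + C := by positivity
  have hinv : Tendsto (fun n : ℕ => 1 / ((n : ℝ) + 1)) atTop (nhds 0) :=
    tendsto_one_div_add_atTop_nhds_zero_nat
  have hlower : Tendsto (fun n : ℕ => (T - T * (1 / (n + 1)) - C * (e n / (n + 1))) / (T + C))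
      atTop (nhds (T / (T + C))) := by
    simpa using ((hinv.const_mul T).const_sub T |>.sub (he.const_mul C)).div_const (T + C)
  have hupper : Tendsto (fun n : ℕ => (T + T * K * (1 / (n + 1))) / (T + C))
      atTop (nhds (T / (T + C))) := by
    simpa using ((hinv.const_mul (T * K)).const_add T).div_const (T + C)
  -- Eliminating `U n`: `N n * (T + C) = T * n + T * (U n * C + N n - n) - C * (U n * T - N n)`.
  refine tendsto_of_tendsto_of_tendsto_of_le_of_le hlower hupper (fun n => ?_) fun n => ?_
  · have hmul : T * n - C * e n ≤ N n * (T + C) := by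
      linarith [mul_le_mul_of_nonneg_left (hoff n) hT.le, mul_le_mul_of_nonneg_left (hon' n) hC]
    calc (T - T * (1 / (n + 1)) - C * (e n / (n + 1))) / (T + C)
        = (T * n - C * e n) / (T + C) / (n + 1) := by
          field_simp
          ring
      _ ≤ N n / (n + 1) := by
          gcongr
          exact (div_le_iff₀ hTC).2 hmul
  · have hmul : N n * (T + C) ≤ T * (n + 1) + T * K := by
      linarith [mul_le_mul_of_nonneg_left (hoff' n) hT.le, mul_le_mul_of_nonneg_left (hon n) hC]
    calc N n / (n + 1) ≤ (T * (n + 1) + T * K) / (T + C) / (n + 1) := by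
          gcongr
          exact (le_div_iff₀ hTC).2 hmul
      _ = (T + T * K * (1 / (n + 1))) / (T + C) := by
          field_simp

lemma tendsto_integral_natCast_tsub {Ω : Type*} [MeasurableSpace Ω] {P : Measure Ω} {f : Ω → ℕ}
    (hf : Measurable f) (hint : Integrable (fun ω => (f ω : ℝ)) P) :
    Tendsto (fun j : ℕ => ∫ ω, ((f ω - j : ℕ) : ℝ) ∂P) atTop (nhds 0) := by
  rw [← integral_zero Ω ℝ (μ := P)]
  refine tendsto_integral_of_dominated_convergence (fun ω => (f ω : ℝ))
    (fun j => by fun_prop) hint (fun j => .of_forall fun ω => by simp) (.of_forall fun ω => ?_)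
  refine tendsto_const_nhds.congr' ?_
  filter_upwards [eventually_ge_atTop (f ω)] with j hj
  simp [Nat.sub_eq_zero_of_le hj]

variable {Ω : Type*} [MeasurableSpace Ω] {P : Measure Ω} {X : Ω → ℕ → ℝ} {μ h : ℝ}

namespace IsIIDSequence

lemma ae_forall_nonempty_negTimes (hX : IsIIDSequence X P)
    (hfin : ∀ᵐ ω ∂P, (negTimes 0 (X ω)).Nonempty) :
    ∀ᵐ ω ∂P, ∀ t, (negTimes 0 (tail t (X ω))).Nonempty :=
  hX.ae_forall_tail (measurableSet_nonempty_negTimes 0) hfin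

lemma integral_renewalReward (hX : IsIIDSequence X P) {g : (ℕ → ℝ) → ℝ} (hg : Measurable g)
    (hgX : Integrable (fun ω => g (X ω)) P) (n : ℕ) :
    ∫ ω, renewalReward μ h g n (X ω) ∂P =
      (∑ t ∈ Finset.range (n + 1), P.real (X ⁻¹' renewalAt μ h t)) * ∫ ω, g (X ω) ∂P :=
  hX.integral_sum_indicator_comp_tail measurableSet_renewalAt dependsOn_renewalAt hg hgX (n + 1)

lemma integrable_renewalReward (hX : IsIIDSequence X P) {g : (ℕ → ℝ) → ℝ} (hg : Measurable g)
    (hgX : Integrable (fun ω => g (X ω)) P) (n : ℕ) :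
    Integrable (fun ω => renewalReward μ h g n (X ω)) P :=
  integrable_finsetSum _ fun t _ =>
    hX.integrable_indicator_comp_tail (measurableSet_renewalAt t) hg hgX

lemma integrable_sampleCount (hX : IsIIDSequence X P) (n : ℕ) :
    Integrable (fun ω => sampleCount μ h n (X ω)) P :=
  have := hX.iIndepFun.isProbabilityMeasure
  integrable_finsetSum _ fun j _ =>
    (integrable_const (1 : ℝ)).indicator (hX.measurable (measurableSet_sampledAt j))

lemma integrable_offTime (hX : IsIIDSequence X P) (hμ : 0 < μ) :
    Integrable (fun ω => (offTime μ h 0 (X ω) : ℝ)) P := by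
  have := hX.iIndepFun.isProbabilityMeasure
  have hmeas : Measurable fun ω => (offTime μ h 0 (X ω) : ℝ) :=
    measurable_from_nat.comp ((measurable_offTime μ h 0).comp hX.measurable)
  refine .of_bound hmeas.aestronglyMeasurable ⌈h / μ⌉₊ (.of_forall fun ω => ?_)
  simpa using offTime_le hμ

theorem integral_sampleCount_le_renewalReward (hX : IsIIDSequence X P) (hh : 0 ≤ h)
    (hfin : ∀ᵐ ω ∂P, (negTimes 0 (X ω)).Nonempty)
    (hτ : Integrable (fun ω => (passageTime 0 (X ω) : ℝ)) P) (n : ℕ) :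
    ∫ ω, sampleCount μ h n (X ω) ∂P ≤
      ∫ ω, renewalReward μ h (fun y => passageTime 0 y) n (X ω) ∂P := by
  refine integral_mono_ae (hX.integrable_sampleCount n)
    (hX.integrable_renewalReward (by fun_prop) hτ n) ?_
  filter_upwards [hX.ae_forall_nonempty_negTimes hfin] with ω hω
  simp [renewalReward_passageTime_eq hh hω]

theorem integral_renewalReward_le_sampleCount_add (hX : IsIIDSequence X P) (hh : 0 ≤ h)
    (hfin : ∀ᵐ ω ∂P, (negTimes 0 (X ω)).Nonempty)
    (hτ : Integrable (fun ω => (passageTime 0 (X ω) : ℝ)) P) (n : ℕ) :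
    ∫ ω, renewalReward μ h (fun y => passageTime 0 y) n (X ω) ∂P ≤
      ∫ ω, sampleCount μ h n (X ω) ∂P +
        ∑ j ∈ Finset.range (n + 1), ∫ ω, ((passageTime 0 (X ω) - j : ℕ) : ℝ) ∂P := by
  have hident (t j : ℕ) : IdentDistrib (fun ω => ((passageTime 0 (X ω) - j : ℕ) : ℝ))
      (fun ω => ((passageTime 0 (tail t (X ω)) - j : ℕ) : ℝ)) P P :=
    (hX.identDistrib_tail t).comp (u := fun y => ((passageTime 0 y - j : ℕ) : ℝ)) (by fun_prop)
  have hint (t j : ℕ) : Integrable (fun ω => ((passageTime 0 (tail t (X ω)) - j : ℕ) : ℝ)) P :=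
    (hident t j).integrable_snd <| hτ.mono (hident t j).aemeasurable_fst.aestronglyMeasurable <|
      .of_forall fun ω => by simp
  have hsum : ∑ j ∈ Finset.range (n + 1), ∫ ω, ((passageTime 0 (X ω) - j : ℕ) : ℝ) ∂P =
      ∫ ω, ∑ t ∈ Finset.range (n + 1), ((passageTime 0 (tail t (X ω)) - (n - t) : ℕ) : ℝ) ∂P := by
    rw [integral_finsetSum _ fun t _ => hint t (n - t), ← Finset.sum_range_reflect]
    exact Finset.sum_congr rfl fun t _ => by simpa using (hident t (n - t)).integral_eq
  rw [hsum, ← integral_add (hX.integrable_sampleCount n)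
    (integrable_finsetSum _ fun t _ => hint t (n - t))]
  refine integral_mono_ae (hX.integrable_renewalReward (by fun_prop) hτ n)
    ((hX.integrable_sampleCount n).add (integrable_finsetSum _ fun t _ => hint t (n - t))) ?_
  filter_upwards [hX.ae_forall_nonempty_negTimes hfin] with ω hω
  rw [renewalReward_passageTime_eq hh hω]
  exact add_le_add_right (mod_cast residualOn_le_sum hh hω n) _

theorem integral_renewalReward_offTime_add_mem_Icc (hX : IsIIDSequence X P) (hμ : 0 < μ)
    (hh : 0 ≤ h) (hfin : ∀ᵐ ω ∂P, (negTimes 0 (X ω)).Nonempty) (n : ℕ) :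
    ∫ ω, renewalReward μ h (fun y => offTime μ h 0 y) n (X ω) ∂P +
      ∫ ω, sampleCount μ h n (X ω) ∂P ∈ Icc (n : ℝ) (n + ⌈h / μ⌉₊) := by
  have := hX.iIndepFun.isProbabilityMeasure
  have hoff := hX.integrable_renewalReward (μ := μ) (h := h)
    (g := fun y => (offTime μ h 0 y : ℝ)) (by fun_prop) (hX.integrable_offTime hμ) n
  have hon := hX.integrable_sampleCount (μ := μ) (h := h) n
  have hbal : ∀ᵐ ω ∂P, renewalReward μ h (fun y => offTime μ h 0 y) n (X ω) +
      sampleCount μ h n (X ω) = n + residualOff μ h (X ω) n := by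
    filter_upwards [hX.ae_forall_nonempty_negTimes hfin] with ω hω
    exact renewalReward_offTime_add hμ hh hω n
  rw [← integral_add hoff hon]
  constructor
  · have hle := integral_mono_ae (integrable_const (n : ℝ)) (hoff.add hon) <|
      hbal.mono fun ω hω => by simp [hω]
    simpa using hle
  · have hle := integral_mono_ae (hoff.add hon) (integrable_const ((n : ℝ) + ⌈h / μ⌉₊)) <|
      hbal.mono fun ω hω => by simpa [hω] using residualOff_le hμ hh (X ω) n
    simpa using hle

end IsIIDSequence

lemma integral_passageTime_pos [IsProbabilityMeasure P]
    (hfin : ∀ᵐ ω ∂P, (negTimes 0 (X ω)).Nonempty)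
    (hτ : Integrable (fun ω => (passageTime 0 (X ω) : ℝ)) P) :
    0 < ∫ ω, (passageTime 0 (X ω) : ℝ) ∂P := by
  have hle : ∫ _, (1 : ℝ) ∂P ≤ ∫ ω, (passageTime 0 (X ω) : ℝ) ∂P :=
    integral_mono_ae (integrable_const 1) hτ <|
      hfin.mono fun ω hω => Nat.one_le_cast.2 (one_le_passageTime hω)
  exact zero_lt_one.trans_le (by simpa using hle)

theorem tendsto_integral_sampleCount_div (hX : IsIIDSequence X P) (hμ : 0 < μ) (hh : 0 ≤ h)
    (hfin : ∀ᵐ ω ∂P, (negTimes 0 (X ω)).Nonempty)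
    (hτ : Integrable (fun ω => (passageTime 0 (X ω) : ℝ)) P) :
    Tendsto (fun n : ℕ => (∫ ω, sampleCount μ h n (X ω) ∂P) / (n + 1)) atTop
      (nhds ((∫ ω, (passageTime 0 (X ω) : ℝ) ∂P) /
        ((∫ ω, (passageTime 0 (X ω) : ℝ) ∂P) + ∫ ω, (offTime μ h 0 (X ω) : ℝ) ∂P))) := by
  have := hX.iIndepFun.isProbabilityMeasure
  have hwald_on := hX.integral_renewalReward (μ := μ) (h := h)
    (g := fun y => (passageTime 0 y : ℝ)) (by fun_prop) hτ
  have hwald_off := hX.integral_renewalReward (μ := μ) (h := h)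
    (g := fun y => (offTime μ h 0 y : ℝ)) (by fun_prop) (hX.integrable_offTime hμ)
  have hresidual := (tendsto_add_atTop_iff_nat 1).2
    (tendsto_integral_natCast_tsub ((measurable_passageTime 0).comp hX.measurable) hτ).cesaro
  refine tendsto_div_of_renewal_bounds (K := ⌈h / μ⌉₊)
    (U := fun n => ∑ t ∈ Finset.range (n + 1), P.real (X ⁻¹' renewalAt μ h t))
    (e := fun n => ∑ j ∈ Finset.range (n + 1), ∫ ω, ((passageTime 0 (X ω) - j : ℕ) : ℝ) ∂P)
    (integral_passageTime_pos hfin hτ) (integral_nonneg fun _ => Nat.cast_nonneg _)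
    (fun n => ?_) (fun n => ?_) (fun n => ?_) (fun n => ?_) ?_
  · simpa only [← hwald_on] using hX.integral_sampleCount_le_renewalReward hh hfin hτ n
  · simpa only [← hwald_on] using hX.integral_renewalReward_le_sampleCount_add hh hfin hτ n
  · simpa only [← hwald_off] using (hX.integral_renewalReward_offTime_add_mem_Icc hμ hh hfin n).1
  · simpa only [← hwald_off] using (hX.integral_renewalReward_offTime_add_mem_Icc hμ hh hfin n).2
  · simpa [div_eq_inv_mul] using hresidual

theorem pdc_deCusum_eq_general (hX : IsIIDSequence X P) (hμ : 0 < μ) (hh : 0 ≤ h)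
    (hfin : ∀ᵐ ω ∂P, (negTimes 0 (X ω)).Nonempty)
    (hτ : Integrable (fun ω => (passageTime 0 (X ω) : ℝ)) P) :
    Tendsto (fun γ : ℕ => (1 / (γ : ℝ)) *
        ∫ ω, ({j : ℕ | j < γ - 1 ∧ 0 ≤ deCusum (X ω) μ h 0 j}.ncard : ℝ) ∂P) atTop
      (nhds ((∫ ω, (passageTime 0 (X ω) : ℝ) ∂P) /
        ((∫ ω, (passageTime 0 (X ω) : ℝ) ∂P) + ∫ ω, (offTime μ h 0 (X ω) : ℝ) ∂P))) := by
  simp only [← sampleCount_eq_ncard, one_div_mul_eq_div]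
  exact (tendsto_add_atTop_iff_nat 1).1
    (by simpa using tendsto_integral_sampleCount_div hX hμ hh hfin hτ)

end DutyCycle

/-- For i.i.d. integrable increments with negative mean, the pre-change duty cycle of the
DE-CuSum scheme started at `0` (the sample at time `k` being taken iff `W_{k-1} ≥ 0`) equals
`E[τ₋] / (E[τ₋] + E[⌈-max(S_{τ₋}, -h)/μ⌉])`, where `τ₋ = inf{n ≥ 1 : S_n < 0}` is the first
descending ladder epoch and `max(S_{τ₋}, -h)` the truncated ladder height; in particular the
duty cycle does not depend on any detection threshold. -/
theorem pdc_deCusum_eq {Ω : Type*} [MeasurableSpace Ω] (P : Measure Ω)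
    [IsProbabilityMeasure P] (ξ : ℕ → Ω → ℝ) (hmeas : ∀ n, Measurable (ξ n))
    (hindep : iIndepFun ξ P)
    (hid : ∀ n, IdentDistrib (ξ n) (ξ 0) P P)
    (hint : Integrable (ξ 0) P) (hmean : ∫ ω, ξ 0 ω ∂P < 0)
    (μ h : ℝ) (hμ : 0 < μ) (hh : 0 ≤ h) :
    Filter.limsup (fun γ : ℕ =>
        (1 / (γ : ℝ)) *
          ∫ ω, (Set.ncard {j : ℕ | j < γ - 1 ∧
            0 ≤ deCusum (fun k => ξ k ω) μ h 0 j} : ℝ) ∂P) Filter.atTop =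
      (∫ ω, ((sInf {n : ℕ | 1 ≤ n ∧ psum (fun k => ξ k ω) n < 0} : ℕ) : ℝ) ∂P) /
        ((∫ ω, ((sInf {n : ℕ | 1 ≤ n ∧ psum (fun k => ξ k ω) n < 0} : ℕ) : ℝ) ∂P) +
          ∫ ω, (⌈-max (psum (fun k => ξ k ω)
              ((sInf {n : ℕ | 1 ≤ n ∧ psum (fun k => ξ k ω) n < 0} : ℕ))) (-h) / μ⌉₊ : ℝ) ∂P) := by
  have hX : IsIIDSequence (fun ω k => ξ k ω) P := ⟨hmeas, hindep, hid⟩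
  simpa [passageTime, negTimes, offTime] using (pdc_deCusum_eq_general hX hμ hh
    (hX.ae_nonempty_negTimes hint hmean) (hX.integrable_passageTime hint hmean)).limsup_eq
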